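/- Let p be an odd prime and n an even integer with 2 ≤ n ≤ p-2. Then the generalized Bernoulli number B_{1,ω^{n-1}} := (1/p)·∑_{a=1}^{p-1} ω^{n-1}(a)·a ∈ ℤ_p satisfies B_{1,ω^{n-1}} ≡ B_n/n (mod p), where B_n is the n-th ordinary Bernoulli number and ω is the Teichmüller character mod p. -/

import Mathlib

/-!
Write `a` for the representative of `s : (ZMod p)ˣ` in `[1, p - 1]`, so that `a ≡ ω(s) (mod p)` and
hence `a ^ n ≡ ω(s) ^ n + n ω(s) ^ (n - 1) (a - ω(s)) (mod p ^ 2)`. Summing over `s`, the terms in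
`ω(s) ^ n` vanish, since `ω ^ n` is a nontrivial character, which leaves
`∑ a ^ n ≡ n ∑ ω(s) ^ (n - 1) a (mod p ^ 2)`. By Faulhaber's formula the left side is
`p B_n (mod p ^ 2)`: the other terms are divisible by `p ^ 2` because `n + 1` and, by
von Staudt–Clausen, the denominators of the `B_i` with `i < n` are prime to `p`. It remains to
divide by `n p`.
-/

open Finset

lemma sq_dvd_sum_pow_sub_natCast_mul_sum {ι R : Type*} [CommRing R] {S : Finset ι} {t w : ι → R}
    {π : R} {n : ℕ} (hπ : ∀ i ∈ S, π ∣ t i - w i) (hw : ∑ i ∈ S, w i ^ n = 0) :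
    π ^ 2 ∣ ∑ i ∈ S, t i ^ n - n * ∑ i ∈ S, w i ^ (n - 1) * t i := by
  have hpow (x : R) : n * (x ^ (n - 1) * x) = n * x ^ n := by
    cases n <;> simp [pow_succ]
  have hterm (i : ι) (hi : i ∈ S) :
      π ^ 2 ∣ t i ^ n - n * (w i ^ (n - 1) * t i) + (n - 1) * w i ^ n := by
    convert (pow_dvd_pow_of_dvd (hπ i hi) 2).trans (sq_dvd_add_pow_sub_sub (t i - w i) (w i) n)
      using 1
    rw [add_sub_cancel]
    linear_combination -hpow (w i)
  have hsum := dvd_sum hterm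
  rwa [sum_add_distrib, sum_sub_distrib, ← mul_sum, ← mul_sum, hw, mul_zero, add_zero] at hsum

lemma sum_units_lift_pow_eq_zero {K R : Type*} [Field K] [Fintype K] [DecidableEq K] [CommRing R]
    [IsDomain R] {r : R →+* K} {ω : Kˣ →* R} (hω : ∀ s, r (ω s) = s) {n : ℕ}
    (hn : ¬ Fintype.card K - 1 ∣ n) : ∑ s, ω s ^ n = 0 := by
  refine sum_hom_units_eq_zero (ω ^ n) fun h ↦ hn ?_
  refine (FiniteField.forall_pow_eq_one_iff K n).1 fun s ↦ Units.ext ?_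
  simpa [hω] using congrArg r (DFunLike.congr_fun h s)

lemma sum_units_zmod_val {M : Type*} [AddCommMonoid M] (p : ℕ) [Fact p.Prime] (f : ℕ → M) :
    ∑ s : (ZMod p)ˣ, f (s : ZMod p).val = ∑ a ∈ Ico 1 p, f a := by
  refine sum_bij (fun s _ ↦ (s : ZMod p).val) (fun s _ ↦ ?_)
    (fun s _ t _ h ↦ Units.ext (ZMod.val_injective p h)) (fun a ha ↦ ?_) (fun _ _ ↦ rfl)
  · simp [Nat.one_le_iff_ne_zero, ZMod.val_lt]
  · obtain ⟨ha1, hap⟩ := mem_Ico.1 ha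
    have hval : (a : ZMod p).val = a := ZMod.val_cast_of_lt hap
    have ha0 : (a : ZMod p) ≠ 0 := by
      rw [← ZMod.val_ne_zero, hval]
      exact Nat.one_le_iff_ne_zero.1 ha1
    exact ⟨Units.mk0 _ ha0, mem_univ _, hval⟩

section Padic

variable {p : ℕ} [Fact p.Prime]

lemma inv_natCast_mem_padicInt_subring {m : ℕ} (hm : p.Coprime m) :
    (m : ℚ_[p])⁻¹ ∈ PadicInt.subring p := by
  rw [PadicInt.mem_subring_iff, norm_inv, Padic.norm_natCast_eq_one_iff.2 hm, inv_one]

lemma bernoulli_mem_padicInt_subring {k : ℕ} (hk : ¬ p - 1 ∣ k) :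
    ((bernoulli k : ℚ) : ℚ_[p]) ∈ PadicInt.subring p := by
  have hp : p.Prime := Fact.out
  obtain ⟨m, rfl | rfl⟩ := Nat.even_or_odd' k
  · obtain ⟨z, hz⟩ := Bernoulli.vonStaudt_clausen m
    rw [eq_sub_of_add_eq hz.symm]
    push_cast
    refine sub_mem (intCast_mem _ z) (sum_mem fun q hq ↦ ?_)
    obtain ⟨-, hq, hdvd⟩ := mem_filter.1 hq
    rw [one_div]
    refine inv_natCast_mem_padicInt_subring ((Nat.coprime_primes hp hq).2 ?_)
    rintro rfl
    exact hk hdvd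
  · obtain rfl | hm := Nat.eq_zero_or_pos m
    · have hp2 : p ≠ 2 := by
        rintro rfl
        exact hk (one_dvd _)
      have h2 := inv_natCast_mem_padicInt_subring ((Nat.coprime_primes hp Nat.prime_two).2 hp2)
      simpa [neg_div] using neg_mem h2
    · rw [bernoulli_eq_zero_of_odd (odd_two_mul_add_one m) (by omega), Rat.cast_zero]
      exact zero_mem _

lemma exists_sum_range_pow_eq_mul_bernoulli_add_sq_mul {n : ℕ} (hn : n < p - 1) (N : ℕ) :
    ∃ d : ℤ_[p], ∑ a ∈ range N, (a : ℚ_[p]) ^ n = N * (bernoulli n : ℚ) + N ^ 2 * d := by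
  let summand (i : ℕ) : ℚ_[p] :=
    (bernoulli i : ℚ) * (n + 1).choose i * N ^ (n - 1 - i) * ((n + 1 : ℕ) : ℚ_[p])⁻¹
  have hsummand : ∑ i ∈ range n, summand i ∈ PadicInt.subring p := by
    refine sum_mem fun i hi ↦ mul_mem (mul_mem (mul_mem ?_ (natCast_mem _ _))
      (pow_mem (natCast_mem _ _) _)) (inv_natCast_mem_padicInt_subring ?_)
    · obtain rfl | hi0 := Nat.eq_zero_or_pos i
      · simp
      · exact bernoulli_mem_padicInt_subring
          (Nat.not_dvd_of_pos_of_lt hi0 ((mem_range.1 hi).trans hn))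
    · exact Nat.coprime_of_lt_prime n.succ_ne_zero (by omega) Fact.out
  refine ⟨⟨_, hsummand⟩, ?_⟩
  have hfaulhaber := congrArg (Rat.cast : ℚ → ℚ_[p]) (sum_range_pow N n)
  push_cast at hfaulhaber
  rw [hfaulhaber, sum_range_succ, add_comm, mul_sum]
  congr 1
  · have : (n : ℚ_[p]) + 1 ≠ 0 := Nat.cast_add_one_ne_zero n
    simp [field]
  · refine sum_congr rfl fun i hi ↦ ?_
    have hexp : n + 1 - i = n - 1 - i + 2 := by
      have := mem_range.1 hi
      omega
    simp only [summand, hexp, pow_add, div_eq_mul_inv, Nat.cast_add, Nat.cast_one]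
    ring

lemma dvd_natCast_val_sub_of_toZMod_eq {x : ℤ_[p]} {s : ZMod p}
    (hx : PadicInt.toZMod x = s) : (p : ℤ_[p]) ∣ (s.val : ℤ_[p]) - x := by
  rw [← Ideal.mem_span_singleton, ← PadicInt.maximalIdeal_eq_span_p, ← PadicInt.ker_toZMod,
    RingHom.mem_ker, map_sub, hx, map_natCast, ZMod.natCast_zmod_val, sub_self]

lemma exists_natCast_mul_sum_pow_mul_val_eq_mul_bernoulli_add_sq_mul {n : ℕ} (hn0 : n ≠ 0)
    (hn : n < p - 1) {ω : (ZMod p)ˣ →* ℤ_[p]} (hω : ∀ s, PadicInt.toZMod (ω s) = (s : ZMod p)) :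
    ∃ d : ℤ_[p], (n : ℚ_[p]) * ∑ s, (ω s : ℚ_[p]) ^ (n - 1) * (s : ZMod p).val
      = p * (bernoulli n : ℚ) + p ^ 2 * d := by
  have hcharSum : ∑ s, ω s ^ n = 0 := by
    refine sum_units_lift_pow_eq_zero hω ?_
    rw [ZMod.card]
    exact Nat.not_dvd_of_pos_of_lt (Nat.pos_of_ne_zero hn0) hn
  obtain ⟨d₁, hd₁⟩ := sq_dvd_sum_pow_sub_natCast_mul_sum
    (fun s _ ↦ dvd_natCast_val_sub_of_toZMod_eq (hω s)) hcharSum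
  obtain ⟨d₂, hd₂⟩ := exists_sum_range_pow_eq_mul_bernoulli_add_sq_mul hn p
  have hpowSum : ∑ s : (ZMod p)ˣ, ((s : ZMod p).val : ℚ_[p]) ^ n
      = ∑ a ∈ range p, (a : ℚ_[p]) ^ n := by
    rw [sum_units_zmod_val p fun a ↦ (a : ℚ_[p]) ^ n,
      sum_range_eq_add_Ico _ (Nat.Prime.pos Fact.out), Nat.cast_zero, zero_pow hn0, zero_add]
  have hlift := congrArg ((↑) : ℤ_[p] → ℚ_[p]) hd₁
  simp only [PadicInt.coe_sub, PadicInt.coe_sum, PadicInt.coe_mul, PadicInt.coe_pow,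
    PadicInt.coe_natCast, hpowSum, hd₂] at hlift
  exact ⟨d₂ - d₁, by push_cast; linear_combination -hlift⟩

end Padic

theorem generalized_bernoulli_congruence_general (p : ℕ) [Fact p.Prime] (n : ℕ) (hn : n ≠ 0)
    (hnp : n < p - 1) (ω : (ZMod p)ˣ →* ℤ_[p]ˣ)
    (hω : ∀ s, PadicInt.toZMod (ω s : ℤ_[p]) = (s : ZMod p)) :
    ∃ b c : ℤ_[p],
      (b : ℚ_[p]) = (p : ℚ_[p])⁻¹ *
          ∑ s : (ZMod p)ˣ, (((ω s : ℤ_[p]) ^ (n - 1) : ℤ_[p]) : ℚ_[p])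
            * (((s : ZMod p).val : ℕ) : ℚ_[p])
      ∧ (c : ℚ_[p]) = ((bernoulli n / n : ℚ) : ℚ_[p])
      ∧ ∃ d : ℤ_[p], b - c = (p : ℤ_[p]) * d := by
  obtain ⟨d, hd⟩ := exists_natCast_mul_sum_pow_mul_val_eq_mul_bernoulli_add_sq_mul hn hnp
    (ω := (Units.coeHom ℤ_[p]).comp ω) hω
  have hβ : ((bernoulli n : ℚ) : ℚ_[p]) ∈ PadicInt.subring p :=
    bernoulli_mem_padicInt_subring (Nat.not_dvd_of_pos_of_lt (Nat.pos_of_ne_zero hn) hnp)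
  have hu : (n : ℚ_[p])⁻¹ ∈ PadicInt.subring p :=
    inv_natCast_mem_padicInt_subring (Nat.coprime_of_lt_prime hn (by omega) Fact.out)
  let β : ℤ_[p] := ⟨_, hβ⟩
  let u : ℤ_[p] := ⟨_, hu⟩
  have hn' : (n : ℚ_[p]) ≠ 0 := Nat.cast_ne_zero.2 hn
  have hp' : (p : ℚ_[p]) ≠ 0 := Nat.cast_ne_zero.2 (NeZero.ne p)
  refine ⟨u * β + p * (u * d), u * β, ?_, ?_, u * d, by ring⟩
  · rw [eq_inv_mul_iff_mul_eq₀ hp', ← mul_right_inj' hn']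
    simp only [MonoidHom.comp_apply, Units.coeHom_apply] at hd
    push_cast
    rw [hd]
    simp only [u, β]
    field_simp
  · push_cast
    exact inv_mul_eq_div _ _

/-- `B_{1,ω^{n-1}} = (1/p)∑_{a=1}^{p-1} ω^{n-1}(a)·a` lies in `ℤ_p`
and is congruent to `B_n/n` modulo `p`, for `n` even with `2 ≤ n ≤ p-2`. -/
theorem generalized_bernoulli_congruence
    (p : ℕ) [Fact p.Prime] (hodd : Odd p)
    (n : ℕ) (hn : Even n) (h2 : 2 ≤ n) (hn2 : n ≤ p - 2)
    (ω : (ZMod p)ˣ →* ℤ_[p]ˣ)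
    (hω1 : ∀ s, PadicInt.toZMod ((ω s : ℤ_[p])) = (s : ZMod p))
    (hω2 : ∀ s, (ω s) ^ (p - 1) = 1) :
    ∃ b c : ℤ_[p],
      (b : ℚ_[p]) = (p : ℚ_[p])⁻¹ *
          ∑ s : (ZMod p)ˣ, (((ω s : ℤ_[p]) ^ (n - 1) : ℤ_[p]) : ℚ_[p])
            * (((s : ZMod p).val : ℕ) : ℚ_[p])
      ∧ (c : ℚ_[p]) = ((bernoulli n / n : ℚ) : ℚ_[p])
      ∧ ∃ d : ℤ_[p], b - c = (p : ℤ_[p]) * d :=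
  generalized_bernoulli_congruence_general p n (by omega) (by omega) ω hω1
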